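/- arXiv:2003.03355 — 11 statements merged into one kernel-verified Lean document; each statement's English description precedes it below -/
import Mathlib

section
/- Let G and H be simple graphs on the same vertex set such that every edge of H joins two vertices that are reachable in G at dist_G at most 2. Then for all vertices u, v that are reachable in H, u and v are reachable in G and dist_H(u,v) ≥ ⌈dist_G(u,v)/2⌉. In other words, one round of edge modifications under the distance-2 activation rule can decrease any distance by at most a factor of 2. -/
/-- A walk of length `k` in `H` yields a walk of length at most `2 * k` in `G`. -/
theorem exists_walk_le_two_mul {V : Type*} (G H : SimpleGraph V)
    (hH : ∀ u v : V, H.Adj u v → G.Reachable u v ∧ G.dist u v ≤ 2)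
    {u v : V} (p : H.Walk u v) : ∃ q : G.Walk u v, q.length ≤ 2 * p.length := by
  induction p with
  | nil => exact ⟨SimpleGraph.Walk.nil, by simp⟩
  | cons hadj p ih =>
    obtain ⟨q, hq⟩ := ih
    obtain ⟨hr, hd⟩ := hH _ _ hadj
    obtain ⟨r, hr⟩ := hr.exists_walk_length_eq_dist
    refine ⟨r.append q, ?_⟩
    rw [SimpleGraph.Walk.length_append, SimpleGraph.Walk.length_cons]
    omega

/-- If every edge of `H` joins two vertices that are reachable in `G` at `G`-distance at
most 2, then reachability in `H` implies reachability in `G`, and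
`dist_H(u,v) ≥ ⌈dist_G(u,v)/2⌉` (the ceiling expressed as `(dist_G(u,v) + 1) / 2` in `ℕ`). -/
theorem one_round_halves_distance {V : Type*} [Fintype V] (G H : SimpleGraph V)
    (hH : ∀ u v : V, H.Adj u v → G.Reachable u v ∧ G.dist u v ≤ 2)
    (u v : V) (h : H.Reachable u v) :
    G.Reachable u v ∧ (G.dist u v + 1) / 2 ≤ H.dist u v := by
  obtain ⟨p, hp⟩ := h.exists_walk_length_eq_dist
  obtain ⟨q, hq⟩ := exists_walk_le_two_mul G H hH p
  have := SimpleGraph.dist_le q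
  exact ⟨⟨q⟩, by omega⟩
end

section
/- Let G_0, G_1, …, G_T be an actively dynamic sequence of graphs. Then for all vertices u, v that are reachable in G_T, u and v are reachable in G_0 and 2^T · dist_{G_T}(u,v) ≥ dist_{G_0}(u,v). -/
/-- A sequence of simple graphs on a common vertex set is actively dynamic (up to time `T`)
if, for every round `i < T`, every edge of `G (i+1)` that is not an edge of `G i` joins two
vertices that have a common neighbor in `G i`. -/
def ActivelyDynamic {V : Type*} (Gs : ℕ → SimpleGraph V) (T : ℕ) : Prop :=
  ∀ i < T, ∀ u v : V, (Gs (i + 1)).Adj u v → ¬ (Gs i).Adj u v →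
    ∃ w : V, (Gs i).Adj u w ∧ (Gs i).Adj w v

theorem activelyDynamic_walk {V : Type*} (Gs : ℕ → SimpleGraph V) (T : ℕ)
    (hdyn : ActivelyDynamic Gs T) (u v : V) (p : (Gs T).Walk u v) :
    ∃ q : (Gs 0).Walk u v, q.length ≤ 2 ^ T * p.length := by
  induction T generalizing u v with
  | zero => exact ⟨p, by simp⟩
  | succ n ih =>
    have step : ∀ (a b : V) (p : (Gs (n + 1)).Walk a b),
        ∃ q : (Gs n).Walk a b, q.length ≤ 2 * p.length := by
      intro a b p
      induction p with
      | nil => exact ⟨.nil, by simp⟩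
      | @cons x y z hxy p ihp =>
        obtain ⟨q, hq⟩ := ihp
        by_cases hadj : (Gs n).Adj x y
        · exact ⟨.cons hadj q, by simp only [SimpleGraph.Walk.length_cons]; omega⟩
        · obtain ⟨w, h1, h2⟩ := hdyn n (Nat.lt_succ_self n) x y hxy hadj
          exact ⟨.cons h1 (.cons h2 q), by simp only [SimpleGraph.Walk.length_cons]; omega⟩
    obtain ⟨q, hq⟩ := step u v p
    obtain ⟨r, hr⟩ := ih (fun i hi => hdyn i (Nat.lt_succ_of_lt hi)) u v q
    refine ⟨r, hr.trans ?_⟩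
    rw [pow_succ, mul_assoc]
    exact Nat.mul_le_mul_left _ hq

/-- For an actively dynamic sequence `G_0, …, G_T`, if `u` and `v` are reachable in `G_T`
then they are reachable in `G_0` and `2^T · dist_{G_T}(u,v) ≥ dist_{G_0}(u,v)`. -/
theorem activelyDynamic_dist_bound {V : Type*} [Fintype V] (Gs : ℕ → SimpleGraph V)
    (T : ℕ) (hdyn : ActivelyDynamic Gs T) (u v : V) (h : (Gs T).Reachable u v) :
    (Gs 0).Reachable u v ∧ (Gs 0).dist u v ≤ 2 ^ T * (Gs T).dist u v := by
  obtain ⟨p, hp⟩ := h.exists_walk_length_eq_dist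
  obtain ⟨q, hq⟩ := activelyDynamic_walk Gs T hdyn u v p
  rw [hp] at hq
  exact ⟨⟨q⟩, (SimpleGraph.dist_le q).trans hq⟩
end

section
/- Let n ≥ 2 and let G_0, G_1, …, G_T be an actively dynamic sequence with G_0 = P_n the path graph on n vertices. If the endpoints 0 and n−1 are reachable in G_T with dist_{G_T}(0, n−1) ≤ ⌈log₂ n⌉, then 2^T · ⌈log₂ n⌉ ≥ n − 1; hence any transformation strategy that brings the endpoints of a spanning line within distance ⌈log₂ n⌉ requires T = Ω(log n) rounds. -/
/-- The path graph `P_n` on vertices `{0, …, n-1}` with edges `{j, j+1}`. -/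
def pathGraph' (n : ℕ) : SimpleGraph (Fin n) :=
  SimpleGraph.fromRel (fun u v => u.val + 1 = v.val)

theorem adj_stretch {n : ℕ} (Gs : ℕ → SimpleGraph (Fin n)) (T : ℕ)
    (hdyn : ActivelyDynamic Gs T) (h0 : Gs 0 = pathGraph' n) :
    ∀ i ≤ T, ∀ u v : Fin n, (Gs i).Adj u v → v.val ≤ u.val + 2 ^ i := by
  intro i
  induction i with
  | zero =>
    intro _ u v h
    rw [h0, pathGraph', SimpleGraph.fromRel_adj] at h
    simp only [pow_zero]
    omega
  | succ i ih =>
    intro hi u v h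
    have hp : 2 ^ (i + 1) = 2 ^ i + 2 ^ i := by ring
    have hpos : 0 < 2 ^ i := by positivity
    by_cases hold : (Gs i).Adj u v
    · have := ih (by omega) u v hold
      omega
    · obtain ⟨w, h1, h2⟩ := hdyn i (by omega) u v h hold
      have := ih (by omega) u w h1
      have := ih (by omega) w v h2
      omega

theorem walk_stretch {n : ℕ} (G : SimpleGraph (Fin n)) (c : ℕ)
    (hG : ∀ u v : Fin n, G.Adj u v → v.val ≤ u.val + c) {u v : Fin n} (p : G.Walk u v) :
    v.val ≤ u.val + c * p.length := by
  induction p with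
  | nil => simp
  | cons h p ih =>
    have := hG _ _ h
    rw [SimpleGraph.Walk.length_cons, Nat.mul_succ]
    omega

/-- Lower bound on time: if an actively dynamic sequence starting from the path `P_n`
brings the endpoints `0` and `n-1` within distance `⌈log₂ n⌉`, then `2^T·⌈log₂ n⌉ ≥ n-1`,
i.e. `T = Ω(log n)`. -/
theorem path_time_lower_bound (n : ℕ) (hn : 2 ≤ n) (Gs : ℕ → SimpleGraph (Fin n)) (T : ℕ)
    (hdyn : ActivelyDynamic Gs T) (h0 : Gs 0 = pathGraph' n)
    (hreach : (Gs T).Reachable ⟨0, by omega⟩ ⟨n - 1, by omega⟩)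
    (hdist : (Gs T).dist ⟨0, by omega⟩ ⟨n - 1, by omega⟩ ≤ Nat.clog 2 n) :
    n - 1 ≤ 2 ^ T * Nat.clog 2 n := by
  obtain ⟨p, hp⟩ := hreach.exists_walk_length_eq_dist
  have h := walk_stretch (Gs T) (2 ^ T) (adj_stretch Gs T hdyn h0 T le_rfl) p
  rw [hp] at h
  simp only [Nat.zero_add] at h
  exact h.trans (Nat.mul_le_mul_left _ hdist)
end

section
/- Let G and H be simple graphs on the same vertex set such that every edge of H is either an edge of G or joins two vertices that have a common neighbor in G, and let k be the number of edges of H that are not edges of G. Then for all vertices u, v reachable in H, u and v are reachable in G and dist_H(u,v) ≥ dist_G(u,v) − k. In other words, each activated edge can decrease any distance by at most 1. -/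
open Classical in
theorem activated_walk_aux {V : Type*} (G H : SimpleGraph V)
    (hH : ∀ u v : V, H.Adj u v → G.Adj u v ∨ ∃ w : V, G.Adj u w ∧ G.Adj w v)
    {u v : V} (p : H.Walk u v) :
    ∃ q : G.Walk u v, q.length ≤ p.length +
      (p.edges.filter (fun e => decide (e ∉ G.edgeSet))).length := by
  induction p with
  | nil => exact ⟨.nil, by simp⟩
  | @cons a b c hab p ih =>
    obtain ⟨q, hq⟩ := ih
    by_cases hg : G.Adj a b
    · refine ⟨.cons hg q, ?_⟩
      simp [hg] at hq ⊢
      omega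
    · obtain ⟨w, h1, h2⟩ := (hH a b hab).resolve_left hg
      refine ⟨.cons h1 (.cons h2 q), ?_⟩
      simp [hg] at hq ⊢
      omega


/-- If every edge of `H` is an edge of `G` or joins two vertices with a common neighbor in
`G`, and `k` is the number of edges of `H` not in `G`, then reachability in `H` implies
reachability in `G` and `dist_H(u,v) ≥ dist_G(u,v) - k`. -/
theorem activated_edges_distance_bound {V : Type*} [Fintype V] (G H : SimpleGraph V)
    (hH : ∀ u v : V, H.Adj u v → G.Adj u v ∨ ∃ w : V, G.Adj u w ∧ G.Adj w v)
    (u v : V) (h : H.Reachable u v) :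
    G.Reachable u v ∧
      (G.dist u v : ℤ) - ((H.edgeSet \ G.edgeSet).ncard : ℤ) ≤ (H.dist u v : ℤ) := by
  classical
  obtain ⟨p, hp, hl⟩ := h.exists_path_of_dist
  obtain ⟨q, hq⟩ := activated_walk_aux G H hH p
  refine ⟨⟨q⟩, ?_⟩
  have h1 := SimpleGraph.dist_le q
  have hnd : (p.edges.filter (fun e => decide (e ∉ G.edgeSet))).Nodup :=
    hp.isTrail.edges_nodup.filter _
  have h2 : (p.edges.filter (fun e => decide (e ∉ G.edgeSet))).length ≤
      (H.edgeSet \ G.edgeSet).ncard := by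
    rw [← List.toFinset_card_of_nodup hnd, ← Set.ncard_coe_finset]
    apply Set.ncard_le_ncard _ (Set.toFinite _)
    intro e he
    simp only [List.coe_toFinset, Set.mem_setOf_eq, List.mem_filter, decide_eq_true_eq] at he
    exact ⟨p.edges_subset_edgeSet he.1, he.2⟩
  omega
end

section
/- Let n ≥ 2 and let G_0, G_1, …, G_T be an actively dynamic sequence with G_0 = P_n the path graph on n vertices. If the endpoints 0 and n−1 are reachable in G_T with dist_{G_T}(0, n−1) ≤ ⌈log₂ n⌉, then the total number of edge activations satisfies Σ_{i<T} |E(G_{i+1}) \ E(G_i)| ≥ n − 1 − ⌈log₂ n⌉; hence Ω(n) total edge activations are required. -/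
open Classical in
theorem walk_pull {V : Type*} (G H : SimpleGraph V)
    (h : ∀ u v : V, H.Adj u v → ¬ G.Adj u v → ∃ w : V, G.Adj u w ∧ G.Adj w v)
    {u v : V} (p : H.Walk u v) :
    ∃ q : G.Walk u v, q.length ≤ p.length + (p.edges.filter (fun e => e ∉ G.edgeSet)).length := by
  induction p with
  | nil => exact ⟨.nil, by simp⟩
  | @cons a b c hab p ih =>
    obtain ⟨q, hq⟩ := ih
    by_cases hg : G.Adj a b
    · refine ⟨.cons hg q, ?_⟩
      simp [hg] at hq ⊢
      omega
    · obtain ⟨w, h1, h2⟩ := h a b hab hg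
      refine ⟨.cons h1 (.cons h2 q), ?_⟩
      simp [hg] at hq ⊢
      omega

theorem walk_pull_ncard {V : Type*} [Finite V] (G H : SimpleGraph V)
    (h : ∀ u v : V, H.Adj u v → ¬ G.Adj u v → ∃ w : V, G.Adj u w ∧ G.Adj w v)
    {u v : V} (p : H.Walk u v) :
    ∃ q : G.Walk u v, q.length ≤ p.length + (H.edgeSet \ G.edgeSet).ncard := by
  classical
  obtain ⟨q, hq⟩ := walk_pull G H h p.bypass
  refine ⟨q, hq.trans (add_le_add p.length_bypass_le_length ?_)⟩
  have hn : (p.bypass.edges.filter (fun e => e ∉ G.edgeSet)).Nodup :=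
    (p.bypass_isPath.isTrail.edges_nodup).filter _
  rw [← List.toFinset_card_of_nodup hn, ← Set.ncard_coe_finset]
  apply Set.ncard_le_ncard _ (Set.toFinite _)
  intro e he
  simp only [List.coe_toFinset, List.mem_filter, Set.mem_ofPred_eq, decide_eq_true_eq] at he
  exact ⟨p.bypass.edges_subset_edgeSet he.1, he.2⟩

theorem pull_all {V : Type*} [Finite V] (Gs : ℕ → SimpleGraph V) (T : ℕ)
    (hdyn : ActivelyDynamic Gs T) {u v : V} (p : (Gs T).Walk u v) :
    ∃ q : (Gs 0).Walk u v, q.length ≤ p.length +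
      ∑ i ∈ Finset.range T, ((Gs (i + 1)).edgeSet \ (Gs i).edgeSet).ncard := by
  induction T with
  | zero => exact ⟨p, by simp⟩
  | succ T ih =>
    obtain ⟨q, hq⟩ := walk_pull_ncard (Gs T) (Gs (T + 1)) (hdyn T (by omega)) p
    obtain ⟨r, hr⟩ := ih (fun i hi => hdyn i (by omega)) q
    refine ⟨r, ?_⟩
    rw [Finset.sum_range_succ]
    omega

theorem path_walk_length {n : ℕ} {G : SimpleGraph (Fin n)} (hG : G = pathGraph' n)
    {u v : Fin n} (p : G.Walk u v) :
    v.val ≤ u.val + p.length := by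
  induction p with
  | nil => simp
  | cons hab p ih =>
    simp only [hG, pathGraph', SimpleGraph.fromRel_adj] at hab
    simp only [SimpleGraph.Walk.length_cons]
    omega

/-- Lower bound on total edge activations: if an actively dynamic sequence starting from
the path `P_n` brings the endpoints `0` and `n-1` within distance `⌈log₂ n⌉`, then the
total number of edge activations is at least `n - 1 - ⌈log₂ n⌉`. -/
theorem path_total_activations_lower_bound (n : ℕ) (hn : 2 ≤ n)
    (Gs : ℕ → SimpleGraph (Fin n)) (T : ℕ)
    (hdyn : ActivelyDynamic Gs T) (h0 : Gs 0 = pathGraph' n)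
    (hreach : (Gs T).Reachable ⟨0, by omega⟩ ⟨n - 1, by omega⟩)
    (hdist : (Gs T).dist ⟨0, by omega⟩ ⟨n - 1, by omega⟩ ≤ Nat.clog 2 n) :
    (n : ℤ) - 1 - (Nat.clog 2 n : ℤ)
      ≤ ∑ i ∈ Finset.range T, (((Gs (i + 1)).edgeSet \ (Gs i).edgeSet).ncard : ℤ) := by
  obtain ⟨p, hp⟩ := hreach.exists_walk_length_eq_dist
  obtain ⟨q, hq⟩ := pull_all Gs T hdyn p
  have h1 := path_walk_length h0 q
  rw [← Nat.cast_sum]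
  simp only at h1
  omega
end

section
/- There exists a constant C such that for every connected simple graph G on n ≥ 2 vertices there is an actively dynamic sequence G_0 = G, G_1, …, G_T with T ≤ C·log₂ n, total edge activations Σ_{i<T} |E(G_{i+1}) \ E(G_i)| ≤ C·n, and such that G_T is a tree having a vertex r with dist_{G_T}(r, v) ≤ ⌈log₂ n⌉ for every vertex v. That is, the Depth-⌈log₂ n⌉ Tree problem can be solved by a centralized strategy in O(log n) rounds with Θ(n) total edge activations. -/
namespace DepthLog

open SimpleGraph

lemma exists_tour {n : ℕ} (G : SimpleGraph (Fin n)) (hG : G.Connected) (r : Fin n) (k : ℕ)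
    (hk : k < n) :
    ∃ p : G.Walk r r, p.length ≤ 2 * k ∧ k + 1 ≤ p.support.toFinset.card := by
  induction k with
  | zero => exact ⟨Walk.nil, by simp, by simp⟩
  | succ k ih =>
    obtain ⟨p, hp, hc⟩ := ih (by omega)
    by_cases h : k + 1 + 1 ≤ p.support.toFinset.card
    · exact ⟨p, by omega, h⟩
    have hne : ∃ x, x ∉ p.support.toFinset := by
      by_contra hcon
      push Not at hcon
      have : p.support.toFinset = Finset.univ := by
        ext x; simpa using hcon x
      rw [this] at h
      simp at h
      omega
    obtain ⟨x, hx⟩ := hne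
    obtain ⟨q⟩ := hG.preconnected r x
    obtain ⟨d, -, hd1, hd2⟩ := q.exists_boundary_dart {y | y ∈ p.support} (by simp)
      (by simpa using hx)
    simp only [Set.mem_ofPred_eq] at hd1 hd2
    refine ⟨(p.takeUntil d.fst hd1).append
      (Walk.cons d.adj (Walk.cons d.adj.symm (p.dropUntil d.fst hd1))), ?_, ?_⟩
    · have := congrArg Walk.length (p.take_spec hd1)
      simp only [Walk.length_append, Walk.length_cons] at this ⊢
      omega
    · have hsub : insert d.snd p.support.toFinset ⊆
          ((p.takeUntil d.fst hd1).append
      (Walk.cons d.adj (Walk.cons d.adj.symm (p.dropUntil d.fst hd1)))).support.toFinset := by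
        intro y hy
        rw [Finset.mem_insert, List.mem_toFinset] at hy
        rw [List.mem_toFinset, Walk.mem_support_append_iff]
        rcases hy with rfl | hy
        · right; simp
        · rw [← p.take_spec hd1, Walk.mem_support_append_iff] at hy
          rcases hy with hy | hy
          · left; exact hy
          · right; simp [hy]
      have := Finset.card_le_card hsub
      rw [Finset.card_insert_of_notMem (by simpa using hd2)] at this
      omega

lemma exists_seq {n : ℕ} (hn : 2 ≤ n) (G : SimpleGraph (Fin n)) (hG : G.Connected) :
    ∃ w : ℕ → Fin n, (∀ i, G.Adj (w i) (w (i+1)) ∨ w i = w (i+1)) ∧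
      ∀ v, ∃ i, i ≤ 2 * n - 2 ∧ w i = v := by
  obtain ⟨p, hp, hc⟩ := exists_tour G hG ⟨0, by omega⟩ (n-1) (by omega)
  refine ⟨p.getVert, fun i => ?_, fun v => ?_⟩
  · by_cases h : i < p.length
    · exact Or.inl (p.adj_getVert_succ h)
    · right
      rw [p.getVert_of_length_le (by omega), p.getVert_of_length_le (by omega)]
  · have : p.support.toFinset = Finset.univ := by
      apply Finset.eq_univ_of_card
      apply le_antisymm (Finset.card_le_univ _)
      simp; omega
    have hv : v ∈ p.support := by
      rw [← List.mem_toFinset, this]; simp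
    obtain ⟨i, hi, hl⟩ := Walk.mem_support_iff_exists_getVert.1 hv
    exact ⟨i, by omega, hi⟩

/-- A breadth-first spanning tree. -/
lemma exists_bfs {n : ℕ} (G : SimpleGraph (Fin n)) (r : Fin n) (L : ℕ)
    (hG : ∀ v, ∃ p : G.Walk r v, p.length ≤ L) :
    ∃ T : SimpleGraph (Fin n), T ≤ G ∧ T.IsTree ∧ ∀ v, T.dist r v ≤ L := by
  have hpar : ∀ v, ∃ u, v ≠ r → G.Adj u v ∧ G.dist r u + 1 = G.dist r v := by
    intro v
    by_cases hv : v = r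
    · exact ⟨v, fun h => absurd hv h⟩
    obtain ⟨p0, -⟩ := hG v
    obtain ⟨p, hp⟩ := p0.reachable.exists_walk_length_eq_dist
    have hnn : ¬ p.Nil := fun h => hv h.eq.symm
    refine ⟨p.penultimate, fun _ => ⟨p.adj_penultimate hnn, ?_⟩⟩
    have h1 : G.dist r p.penultimate ≤ p.dropLast.length := dist_le _
    have h2 : p.dropLast.length + 1 = p.length := by
      have := Walk.length_dropLast_add_one hnn
      simpa using this
    have h3 : G.dist r v ≤ G.dist r p.penultimate + 1 := by
      obtain ⟨q, hq⟩ := p.dropLast.reachable.exists_walk_length_eq_dist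
      rw [← hq]
      have := dist_le (q.concat (p.adj_penultimate hnn))
      simpa using this
    omega
  choose par hpar using hpar
  let T : SimpleGraph (Fin n) := SimpleGraph.fromRel (fun u v => v ≠ r ∧ u = par v)
  have hadj : ∀ v, v ≠ r → T.Adj (par v) v := fun v hv => by
    rw [SimpleGraph.fromRel_adj]
    exact ⟨(hpar v hv).1.ne, Or.inl ⟨hv, rfl⟩⟩
  have hwalk : ∀ d v, G.dist r v = d → ∃ p : T.Walk r v, p.length ≤ d := by
    intro d
    induction d with
    | zero =>
      intro v hv
      have : v = r := by
        by_contra h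
        have := (hpar v h).2
        omega
      subst this
      exact ⟨Walk.nil, by simp⟩
    | succ d ih =>
      intro v hv
      have hvr : v ≠ r := by
        rintro rfl
        simp at hv
      obtain ⟨p, hp⟩ := ih (par v) (by have := (hpar v hvr).2; omega)
      exact ⟨p.concat (hadj v hvr), by simpa using hp⟩
  have hconn : T.Connected := by
    rw [connected_iff_exists_forall_reachable]
    exact ⟨r, fun v => (hwalk _ v rfl).choose.reachable⟩
  refine ⟨T, ?_, ?_, ?_⟩
  · intro u v h
    rw [SimpleGraph.fromRel_adj] at h
    rcases h with ⟨-, ⟨h, rfl⟩ | ⟨h, rfl⟩⟩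
    · exact (hpar v h).1
    · exact (hpar u h).1.symm
  · rw [isTree_iff_connected_and_card]
    refine ⟨hconn, le_antisymm ?_ hconn.card_vert_le_card_edgeSet_add_one⟩
    have hsub : T.edgeSet ⊆
        ((Finset.univ.erase r).image (fun v => s(par v, v)) : Finset (Sym2 (Fin n))) := by
      intro e
      induction e with
      | _ u v =>
        intro h
        rw [mem_edgeSet, SimpleGraph.fromRel_adj] at h
        simp only [Finset.coe_image, Set.mem_image, Finset.mem_coe, Finset.mem_erase,
          Finset.mem_univ, and_true]
        rcases h with ⟨-, ⟨h, rfl⟩ | ⟨h, rfl⟩⟩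
        · exact ⟨v, h, rfl⟩
        · exact ⟨u, h, Sym2.eq_swap⟩
    have h1 := Set.ncard_le_ncard hsub (Finset.finite_toSet _)
    rw [Set.ncard_coe_finset] at h1
    have h2 := h1.trans Finset.card_image_le
    rw [Finset.card_erase_of_mem (Finset.mem_univ _)] at h2
    have h3 : 0 < n := by have := r.2; omega
    simp at h2
    rw [Nat.card_coe_set_eq]
    simp
    omega
  · intro v
    obtain ⟨p, hp⟩ := hwalk _ v rfl
    obtain ⟨q, hq⟩ := hG v
    exact (dist_le p).trans (hp.trans ((dist_le q).trans hq))

/-- The graph after `i` rounds of doubling along `w`. -/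
def lev {n : ℕ} (G : SimpleGraph (Fin n)) (w : ℕ → Fin n) (M i : ℕ) : SimpleGraph (Fin n) :=
  G ⊔ SimpleGraph.fromRel (fun u v => ∃ j ≤ i, ∃ k, (k + 1) * 2 ^ j ≤ M ∧
    u = w (k * 2 ^ j) ∧ v = w ((k + 1) * 2 ^ j))

lemma lev_adj {n : ℕ} (G : SimpleGraph (Fin n)) (w : ℕ → Fin n) (M i : ℕ) (u v : Fin n) :
    (lev G w M i).Adj u v ↔ G.Adj u v ∨ (u ≠ v ∧ ∃ j ≤ i, ∃ k, (k + 1) * 2 ^ j ≤ M ∧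
      s(u, v) = s(w (k * 2 ^ j), w ((k + 1) * 2 ^ j))) := by
  unfold lev
  rw [sup_adj, SimpleGraph.fromRel_adj]
  simp only [Sym2.eq_iff]
  constructor
  · rintro (h | ⟨h, ⟨j, hj, k, hk, h1, h2⟩ | ⟨j, hj, k, hk, h1, h2⟩⟩)
    · exact Or.inl h
    · exact Or.inr ⟨h, j, hj, k, hk, Or.inl ⟨h1, h2⟩⟩
    · exact Or.inr ⟨h, j, hj, k, hk, Or.inr ⟨h2, h1⟩⟩
  · rintro (h | ⟨h, j, hj, k, hk, ⟨h1, h2⟩ | ⟨h1, h2⟩⟩)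
    · exact Or.inl h
    · exact Or.inr ⟨h, Or.inl ⟨j, hj, k, hk, h1, h2⟩⟩
    · exact Or.inr ⟨h, Or.inr ⟨j, hj, k, hk, h2, h1⟩⟩

lemma lev_step {n : ℕ} (G : SimpleGraph (Fin n)) (w : ℕ → Fin n) (M i j k : ℕ) (hj : j ≤ i)
    (hk : (k + 1) * 2 ^ j ≤ M) :
    (lev G w M i).Adj (w (k * 2 ^ j)) (w ((k + 1) * 2 ^ j)) ∨
      w (k * 2 ^ j) = w ((k + 1) * 2 ^ j) := by
  by_cases h : w (k * 2 ^ j) = w ((k + 1) * 2 ^ j)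
  · exact Or.inr h
  · left
    rw [lev_adj]
    exact Or.inr ⟨h, j, hj, k, hk, rfl⟩

lemma lev_zero {n : ℕ} (G : SimpleGraph (Fin n)) (w : ℕ → Fin n) (M : ℕ)
    (hw : ∀ i, G.Adj (w i) (w (i+1)) ∨ w i = w (i+1)) : lev G w M 0 = G := by
  ext u v
  rw [lev_adj]
  constructor
  · rintro (h | ⟨h, j, hj, k, hk, h1⟩)
    · exact h
    · obtain rfl : j = 0 := by omega
      simp only [pow_zero, mul_one, Sym2.eq_iff] at h1
      rcases h1 with ⟨rfl, rfl⟩ | ⟨rfl, rfl⟩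
      · exact (hw k).resolve_right h
      · exact ((hw k).resolve_right h.symm).symm
  · exact Or.inl

/-- New edges of round `i` come from level `i+1`. -/
lemma lev_new {n : ℕ} (G : SimpleGraph (Fin n)) (w : ℕ → Fin n) (M i : ℕ) (u v : Fin n)
    (h : (lev G w M (i+1)).Adj u v) (h' : ¬ (lev G w M i).Adj u v) :
    ∃ k, (k + 1) * 2 ^ (i+1) ≤ M ∧
      s(u, v) = s(w (k * 2 ^ (i+1)), w ((k + 1) * 2 ^ (i+1))) := by
  rw [lev_adj] at h h'
  rcases h with h | ⟨h, j, hj, k, hk, h1⟩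
  · exact absurd (Or.inl h) h'
  · by_cases hji : j ≤ i
    · exact absurd (Or.inr ⟨h, j, hji, k, hk, h1⟩) h'
    · obtain rfl : j = i + 1 := by omega
      exact ⟨k, hk, h1⟩

lemma lev_dyn {n : ℕ} (G : SimpleGraph (Fin n)) (w : ℕ → Fin n) (M i : ℕ) (u v : Fin n)
    (h : (lev G w M (i+1)).Adj u v) (h' : ¬ (lev G w M i).Adj u v) :
    ∃ x, (lev G w M i).Adj u x ∧ (lev G w M i).Adj x v := by
  obtain ⟨k, hk, hs⟩ := lev_new G w M i u v h h'
  have e1 : k * 2 ^ (i+1) = (2 * k) * 2 ^ i := by ring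
  have e2 : (k + 1) * 2 ^ (i+1) = (2 * k + 1 + 1) * 2 ^ i := by ring
  rw [e2] at hk
  rw [e1, e2] at hs
  have a1 := lev_step G w M i i (2*k) le_rfl (le_trans (Nat.mul_le_mul_right _ (by omega)) hk)
  have a2 := lev_step G w M i i (2*k+1) le_rfl hk
  rw [Sym2.eq_iff] at hs
  rcases hs with ⟨rfl, rfl⟩ | ⟨rfl, rfl⟩
  · rcases a1 with a1 | a1
    · rcases a2 with a2 | a2
      · exact ⟨_, a1, a2⟩
      · rw [a2] at a1; exact absurd a1 h'
    · rcases a2 with a2 | a2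
      · rw [← a1] at a2; exact absurd a2 h'
      · exact absurd (a1.trans a2) h.ne
  · rcases a1 with a1 | a1
    · rcases a2 with a2 | a2
      · exact ⟨_, a2.symm, a1.symm⟩
      · rw [a2] at a1; exact absurd a1.symm h'
    · rcases a2 with a2 | a2
      · rw [← a1] at a2; exact absurd a2.symm h'
      · exact absurd (a1.trans a2) h.ne.symm

lemma lev_count {n : ℕ} (G : SimpleGraph (Fin n)) (w : ℕ → Fin n) (M i : ℕ) :
    ((lev G w M (i+1)).edgeSet \ (lev G w M i).edgeSet).ncard ≤ M / 2 ^ (i+1) := by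
  have hsub : (lev G w M (i+1)).edgeSet \ (lev G w M i).edgeSet ⊆
      ((Finset.range (M / 2 ^ (i+1))).image
        (fun k => s(w (k * 2 ^ (i+1)), w ((k + 1) * 2 ^ (i+1)))) : Finset (Sym2 (Fin n))) := by
    intro e
    induction e with
    | _ u v =>
      rintro ⟨h, h'⟩
      obtain ⟨k, hk, hs⟩ := lev_new G w M i u v h h'
      simp only [Finset.coe_image, Set.mem_image, Finset.mem_coe, Finset.mem_range]
      exact ⟨k, (Nat.le_div_iff_mul_le (by positivity)).2 hk, hs.symm⟩
  have h1 := Set.ncard_le_ncard hsub (Finset.finite_toSet _)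
  rw [Set.ncard_coe_finset] at h1
  have h2 := h1.trans Finset.card_image_le
  simpa using h2

lemma sum_halves (M L : ℕ) : ∑ i ∈ Finset.range L, M / 2 ^ (i+1) + M / 2 ^ L ≤ M := by
  induction L with
  | zero => simp
  | succ L ih =>
    rw [Finset.sum_range_succ]
    have : M / 2 ^ (L+1) = M / 2 ^ L / 2 := by rw [pow_succ, Nat.div_div_eq_div_mul]
    omega

lemma lev_walk {n : ℕ} (G : SimpleGraph (Fin n)) (w : ℕ → Fin n) (M L : ℕ) (j : ℕ)
    (hj : j ≤ L + 1) : ∀ k p, p < 2 ^ j → k * 2 ^ j + p ≤ M →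
      ∃ q : (lev G w M L).Walk (w (k * 2 ^ j)) (w (k * 2 ^ j + p)),
        q.length ≤ j ∧ (p + 1 < 2 ^ j → q.length + 1 ≤ j) := by
  induction j with
  | zero =>
    intro k p hp hM
    obtain rfl : p = 0 := by simpa using hp
    exact ⟨Walk.nil, by simp, by simp⟩
  | succ j ih =>
    intro k p hp hM
    have e1 : k * 2 ^ (j+1) = (2 * k) * 2 ^ j := by ring
    have e3 : (2 * k + 1) * 2 ^ j = (2 * k) * 2 ^ j + 2 ^ j := by ring
    rw [e1] at hM ⊢
    rw [pow_succ] at hp ⊢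
    by_cases hlt : p < 2 ^ j
    · obtain ⟨q, hq, -⟩ := ih (by omega) (2 * k) p hlt hM
      exact ⟨q, by omega, by omega⟩
    · obtain ⟨q, hq, hq'⟩ := ih (by omega) (2 * k + 1) (p - 2 ^ j) (by omega) (by omega)
      have e2 : (2 * k + 1) * 2 ^ j + (p - 2 ^ j) = (2 * k) * 2 ^ j + p := by omega
      rcases lev_step G w M L j (2 * k) (by omega) (by omega) with a | a
      · refine ⟨Walk.cons a (q.copy rfl (by rw [e2])), by simpa using hq, fun h => ?_⟩
        have := hq' (by omega)
        simpa using this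
      · refine ⟨q.copy a.symm (by rw [e2]), by simp; omega, fun h => ?_⟩
        simpa using hq

end DepthLog

/-- There is a constant `C` such that every connected graph on `n ≥ 2` vertices admits an
actively dynamic sequence of length `T ≤ C·⌈log₂ n⌉` with at most `C·n` total edge
activations ending in a tree of depth at most `⌈log₂ n⌉` from some root `r`:
the centralized Depth-`⌈log₂ n⌉` Tree strategy with `O(log n)` rounds and `Θ(n)` total
edge activations. -/
theorem centralized_depth_log_tree :
    ∃ C : ℕ, ∀ n : ℕ, 2 ≤ n → ∀ G : SimpleGraph (Fin n), G.Connected →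
      ∃ T : ℕ, ∃ Gs : ℕ → SimpleGraph (Fin n),
        Gs 0 = G ∧ ActivelyDynamic Gs T ∧
        T ≤ C * Nat.clog 2 n ∧
        (∑ i ∈ Finset.range T, ((Gs (i + 1)).edgeSet \ (Gs i).edgeSet).ncard) ≤ C * n ∧
        (Gs T).IsTree ∧
        ∃ r : Fin n, ∀ v : Fin n, (Gs T).dist r v ≤ Nat.clog 2 n := by
  refine ⟨2, fun n hn G hG => ?_⟩
  obtain ⟨w, hw, hcov⟩ := DepthLog.exists_seq hn G hG
  have hL1 : 0 < Nat.clog 2 n := Nat.clog_pos (by norm_num) hn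
  have hL2 : n ≤ 2 ^ Nat.clog 2 n := Nat.le_pow_clog (by norm_num) n
  generalize Nat.clog 2 n = L at hL1 hL2 ⊢
  obtain ⟨T, hTle, hT, hd⟩ := DepthLog.exists_bfs (DepthLog.lev G w (2 * n - 2) L) (w 0) L (by
    intro v
    obtain ⟨i, hi, rfl⟩ := hcov v
    have hp : 2 ^ (L + 1) = 2 * 2 ^ L := by ring
    obtain ⟨q, -, hq⟩ := DepthLog.lev_walk G w (2 * n - 2) L (L+1) le_rfl 0 i
      (by omega) (by omega)
    have := hq (by omega)
    refine ⟨q.copy (by simp) (by simp), ?_⟩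
    simp only [SimpleGraph.Walk.length_copy]
    omega)
  refine ⟨L + 1, fun i => if i ≤ L then DepthLog.lev G w (2 * n - 2) i else T, ?_, ?_, by omega,
    ?_, ?_, w 0, ?_⟩
  · simpa using DepthLog.lev_zero G w _ hw
  · intro i hi u v h h'
    have hi' : i ≤ L := by omega
    simp only [hi', if_true] at h h' ⊢
    by_cases hiL : i + 1 ≤ L
    · simp only [hiL, if_true] at h
      exact DepthLog.lev_dyn G w _ i u v h h'
    · simp only [hiL, if_false] at h
      obtain rfl : i = L := by omega
      exact absurd (hTle h) h'
  · rw [Finset.sum_range_succ]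
    have hlast : ((if L + 1 ≤ L then DepthLog.lev G w (2 * n - 2) (L+1) else T).edgeSet \
        (if L ≤ L then DepthLog.lev G w (2 * n - 2) L else T).edgeSet).ncard = 0 := by
      rw [if_neg (by omega), if_pos le_rfl,
        Set.sdiff_eq_empty.2 (SimpleGraph.edgeSet_mono hTle), Set.ncard_empty]
    rw [hlast]
    have hs : ∀ i ∈ Finset.range L,
        ((if i + 1 ≤ L then DepthLog.lev G w (2 * n - 2) (i+1) else T).edgeSet \
        (if i ≤ L then DepthLog.lev G w (2 * n - 2) i else T).edgeSet).ncard
          ≤ (2 * n - 2) / 2 ^ (i+1) := by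
      intro i hi
      rw [Finset.mem_range] at hi
      rw [if_pos (by omega), if_pos (by omega)]
      exact DepthLog.lev_count G w _ i
    have := Finset.sum_le_sum hs
    have := (Nat.le_add_right _ _).trans (DepthLog.sum_halves (2 * n - 2) L)
    beta_reduce
    omega
  · simpa using hT
  · simpa using hd
end

section
/- Fix n ≥ 2 and consider the CutInHalf graphs H_0, H_1, …, H_r. For every i with 1 ≤ i ≤ r and every a ≥ 0 with (a+1)·2^i ≤ n−1, the vertex a·2^i + 2^{i−1} is adjacent in H_{i−1} to both a·2^i and (a+1)·2^i. Consequently H_0, H_1, …, H_r is an actively dynamic sequence: every edge of H_i not in H_{i−1} joins two vertices with a common neighbor in H_{i−1}. -/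
/-- The CutInHalf graph `H_r` on `{0, …, n-1}`: the path edges `{j, j+1}` together with
the edges `{a·2^i, (a+1)·2^i}` for all `1 ≤ i ≤ r` and `a` with `(a+1)·2^i ≤ n-1`. -/
def cutInHalf (n r : ℕ) : SimpleGraph (Fin n) :=
  SimpleGraph.fromRel (fun u v =>
    u.val + 1 = v.val ∨
    ∃ i a : ℕ, 1 ≤ i ∧ i ≤ r ∧ (a + 1) * 2 ^ i ≤ n - 1 ∧
      u.val = a * 2 ^ i ∧ v.val = (a + 1) * 2 ^ i)

theorem cutInHalf_adj_step {n : ℕ} (k b : ℕ) (u v : Fin n)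
    (hu : u.val = b * 2 ^ k) (hv : v.val = (b + 1) * 2 ^ k) : (cutInHalf n k).Adj u v := by
  have hp : 0 < 2 ^ k := by positivity
  rw [cutInHalf, SimpleGraph.fromRel_adj]
  refine ⟨?_, Or.inl ?_⟩
  · intro h
    rw [h, hv, add_mul] at hu
    omega
  · rcases Nat.eq_zero_or_pos k with rfl | hk
    · left
      omega
    · right
      have := v.isLt
      exact ⟨k, b, hk, le_rfl, by omega, hu, hv⟩

theorem cutInHalf_adj_mid {n : ℕ} (k a : ℕ) (u v w : Fin n)
    (hu : u.val = a * 2 ^ (k + 1)) (hv : v.val = a * 2 ^ (k + 1) + 2 ^ k)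
    (hw : w.val = (a + 1) * 2 ^ (k + 1)) :
    (cutInHalf n k).Adj u v ∧ (cutInHalf n k).Adj v w :=
  ⟨cutInHalf_adj_step k (2 * a) u v (by rw [hu]; ring) (by rw [hv]; ring),
    cutInHalf_adj_step k (2 * a + 1) v w (by rw [hv]; ring) (by rw [hw]; ring)⟩

/-- A directed generating pair of `H_(k+1)` is an edge of `H_k` or has a common neighbor. -/
theorem cutInHalf_rel_succ {n : ℕ} (k : ℕ) (u v : Fin n) (hne : u ≠ v)
    (h : u.val + 1 = v.val ∨
      ∃ i a : ℕ, 1 ≤ i ∧ i ≤ k + 1 ∧ (a + 1) * 2 ^ i ≤ n - 1 ∧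
        u.val = a * 2 ^ i ∧ v.val = (a + 1) * 2 ^ i)
    (hn : ¬ (cutInHalf n k).Adj u v) :
    ∃ w : Fin n, (cutInHalf n k).Adj u w ∧ (cutInHalf n k).Adj w v := by
  rw [cutInHalf, SimpleGraph.fromRel_adj] at hn
  rcases h with h | ⟨i, a, h1, h2, h3, h4, h5⟩
  · exact absurd ⟨hne, Or.inl (Or.inl h)⟩ hn
  · rcases Nat.lt_or_ge k i with hi | hi
    · obtain rfl : i = k + 1 := by omega
      have hlt : a * 2 ^ (k + 1) + 2 ^ k < n := by
        have := v.isLt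
        have hp : 0 < 2 ^ k := by positivity
        rw [h5, add_mul, pow_succ] at this
        rw [pow_succ]
        omega
      exact ⟨⟨_, hlt⟩, cutInHalf_adj_mid k a u ⟨_, hlt⟩ v h4 rfl h5⟩
    · exact absurd ⟨hne, Or.inl (Or.inr ⟨i, a, h1, hi, h3, h4, h5⟩)⟩ hn

/-- For every `1 ≤ i ≤ r` and `a` with `(a+1)·2^i ≤ n-1`, the vertex `a·2^i + 2^(i-1)` is
adjacent in `H_(i-1)` to both `a·2^i` and `(a+1)·2^i`; consequently `H_0, …, H_r` is an
actively dynamic sequence. -/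
theorem cutInHalf_activelyDynamic (n r : ℕ) (hn : 2 ≤ n) :
    (∀ i a : ℕ, ∀ u v w : Fin n, 1 ≤ i → i ≤ r → (a + 1) * 2 ^ i ≤ n - 1 →
      u.val = a * 2 ^ i → v.val = a * 2 ^ i + 2 ^ (i - 1) → w.val = (a + 1) * 2 ^ i →
      (cutInHalf n (i - 1)).Adj v u ∧ (cutInHalf n (i - 1)).Adj v w) ∧
    ActivelyDynamic (cutInHalf n) r := by
  constructor
  · intro i a u v w hi _ _ hu hv hw
    obtain ⟨k, rfl⟩ : ∃ k, i = k + 1 := ⟨i - 1, by omega⟩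
    obtain ⟨h1, h2⟩ := cutInHalf_adj_mid k a u v w hu hv hw
    exact ⟨h1.symm, h2⟩
  · intro k _ u v h hnot
    rw [cutInHalf, SimpleGraph.fromRel_adj] at h
    obtain ⟨hne, h | h⟩ := h
    · exact cutInHalf_rel_succ k u v hne h hnot
    · obtain ⟨w, h1, h2⟩ := cutInHalf_rel_succ k v u hne.symm h (fun h => hnot h.symm)
      exact ⟨w, h2.symm, h1.symm⟩
end

section
/- Fix n ≥ 2 and r ≥ 0, and consider the CutInHalf graph H_r. For every vertex j ∈ {0,…,n−1}, dist_{H_r}(j, 2^r·⌊j/2^r⌋) ≤ r. Consequently, for r = ⌈log₂(n−1)⌉, the diameter of H_r is at most 2r + 1, i.e., O(log n). -/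
/-- Consecutive multiples of `2^s` (`s ≤ r`) are adjacent in `H_r`. -/
theorem cutInHalf_adj_step_s13 (n r s a : ℕ) (hs : s ≤ r) (x y : Fin n)
    (hx : x.val = a * 2 ^ s) (hy : y.val = (a + 1) * 2 ^ s) :
    (cutInHalf n r).Adj x y := by
  have hpos : 0 < 2 ^ s := by positivity
  have hlt : x.val < y.val := by
    rw [hx, hy, Nat.add_mul]; omega
  unfold cutInHalf
  rw [SimpleGraph.fromRel_adj]
  refine ⟨fun h => by rw [h] at hlt; omega, Or.inl ?_⟩
  rcases Nat.eq_zero_or_pos s with h0 | h0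
  · left
    subst h0
    simp at hx hy
    omega
  · right
    refine ⟨s, a, h0, hs, ?_, hx, hy⟩
    have := y.isLt
    omega

/-- A short walk from `j` to its rounding down to a multiple of `2^s`. -/
theorem cutInHalf_walk (n r : ℕ) (j : Fin n) (s : ℕ) (hs : s ≤ r) :
    ∀ x : Fin n, x.val = 2 ^ s * (j.val / 2 ^ s) →
      ∃ p : (cutInHalf n r).Walk j x, p.length ≤ s := by
  induction s with
  | zero =>
    intro x hx
    have : x = j := Fin.ext (by simpa using hx)
    subst this
    exact ⟨SimpleGraph.Walk.nil, by simp⟩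
  | succ s ih =>
    intro x hx
    have hle : 2 ^ s * (j.val / 2 ^ s) < n :=
      lt_of_le_of_lt (Nat.mul_div_le _ _) j.isLt
    obtain ⟨p, hp⟩ := ih (by omega) ⟨_, hle⟩ rfl
    have hq : j.val / 2 ^ (s + 1) = (j.val / 2 ^ s) / 2 := by
      rw [pow_succ, Nat.div_div_eq_div_mul]
    rw [hq, pow_succ, mul_assoc] at hx
    rcases Nat.even_or_odd' (j.val / 2 ^ s) with ⟨c, hc | hc⟩
    · have : x = ⟨_, hle⟩ := Fin.ext (by
        rw [hx]
        show _ = 2 ^ s * (j.val / 2 ^ s)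
        congr 1
        omega)
      subst this
      exact ⟨p, by omega⟩
    · have hadj : (cutInHalf n r).Adj x ⟨_, hle⟩ := by
        apply cutInHalf_adj_step_s13 n r s (2 * c) (by omega)
        · rw [hx, mul_comm]
          congr 1
          omega
        · show 2 ^ s * (j.val / 2 ^ s) = _
          rw [mul_comm, hc]
      exact ⟨p.concat hadj.symm, by rw [SimpleGraph.Walk.length_concat]; omega⟩

/-- In the CutInHalf graph `H_r`, every vertex `j` is within distance `r` of
`2^r·⌊j/2^r⌋`; consequently for `r = ⌈log₂(n-1)⌉` the diameter of `H_r` is at most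
`2r + 1`, i.e. `O(log n)`. -/
theorem cutInHalf_diameter (n : ℕ) (hn : 2 ≤ n) :
    (∀ r : ℕ, ∀ j : Fin n,
      (cutInHalf n r).dist j
        ⟨2 ^ r * (j.val / 2 ^ r),
          lt_of_le_of_lt (by rw [mul_comm]; exact Nat.div_mul_le_self _ _) j.isLt⟩ ≤ r) ∧
    (∀ u v : Fin n, (cutInHalf n (Nat.clog 2 (n - 1))).dist u v
      ≤ 2 * Nat.clog 2 (n - 1) + 1) := by
  refine ⟨fun r j => ?_, fun u v => ?_⟩
  · obtain ⟨p, hp⟩ := cutInHalf_walk n r j r le_rfl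
      ⟨_, lt_of_le_of_lt (Nat.mul_div_le _ _) j.isLt⟩ rfl
    exact (SimpleGraph.dist_le p).trans hp
  · have hR : n - 1 ≤ 2 ^ Nat.clog 2 (n - 1) := Nat.le_pow_clog (by norm_num) _
    generalize Nat.clog 2 (n - 1) = R at hR ⊢
    have hpos : 0 < 2 ^ R := by positivity
    have hlt : ∀ w : Fin n, 2 ^ R * (w.val / 2 ^ R) < n := fun w =>
      lt_of_le_of_lt (Nat.mul_div_le _ _) w.isLt
    have hq : ∀ w : Fin n, w.val / 2 ^ R = 0 ∨ w.val / 2 ^ R = 1 := fun w => by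
      have h1 : w.val / 2 ^ R < 2 := by
        rw [Nat.div_lt_iff_lt_mul hpos]
        have := w.isLt
        omega
      generalize w.val / 2 ^ R = t at h1 ⊢
      omega
    obtain ⟨p, hp⟩ := cutInHalf_walk n R u R le_rfl ⟨_, hlt u⟩ rfl
    obtain ⟨q, hq'⟩ := cutInHalf_walk n R v R le_rfl ⟨_, hlt v⟩ rfl
    have hm : ∃ m : (cutInHalf n R).Walk ⟨_, hlt u⟩ ⟨_, hlt v⟩, m.length ≤ 1 := by
      by_cases he : u.val / 2 ^ R = v.val / 2 ^ R
      · have : (⟨_, hlt u⟩ : Fin n) = ⟨_, hlt v⟩ := Fin.ext (by simp only [he])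
        rw [this]
        exact ⟨SimpleGraph.Walk.nil, by simp⟩
      · have hadj : (cutInHalf n R).Adj ⟨_, hlt u⟩ ⟨_, hlt v⟩ := by
          rcases hq u with h1 | h1 <;> rcases hq v with h2 | h2
          · omega
          · exact cutInHalf_adj_step_s13 n R R 0 le_rfl _ _ (by simp [h1]) (by simp [h2])
          · exact (cutInHalf_adj_step_s13 n R R 0 le_rfl _ _ (by simp [h2]) (by simp [h1])).symm
          · omega
        exact ⟨hadj.toWalk, by simp⟩
    obtain ⟨m, hm⟩ := hm
    refine (SimpleGraph.dist_le ((p.append m).append q.reverse)).trans ?_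
    rw [SimpleGraph.Walk.length_append, SimpleGraph.Walk.length_append,
      SimpleGraph.Walk.length_reverse]
    omega
end

section
/- Fix n ≥ 2 and r ≥ 0, and consider the CutInHalf graph H_r. The number of edges of H_r that are not path edges equals Σ_{i=1}^{r} ⌊(n−1)/2^i⌋, which is at most n − 1. Hence the CutInHalf construction uses at most n − 1 edge activations in total. -/
theorem sum_aux (m r : ℕ) : m / 2 ^ r + ∑ i ∈ Finset.Icc 1 r, m / 2 ^ i ≤ m := by
  induction r with
  | zero => simp
  | succ k ih =>
    rw [Finset.sum_Icc_succ_top (by omega)]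
    have : m / 2 ^ (k+1) = m / 2 ^ k / 2 := by rw [pow_succ, Nat.div_div_eq_div_mul]
    omega

def edgeMap (m : ℕ) (p : (_ : ℕ) × ℕ) : Sym2 (Fin (m + 1)) :=
  s(Fin.ofNat (m + 1) (p.2 * 2 ^ p.1), Fin.ofNat (m + 1) ((p.2 + 1) * 2 ^ p.1))

theorem two_le_pow_aux {i : ℕ} (hi : 1 ≤ i) : 2 ≤ 2 ^ i := by
  calc 2 = 2 ^ 1 := rfl
    _ ≤ 2 ^ i := Nat.pow_le_pow_right (by norm_num) hi

theorem val_aux {m k : ℕ} (h : k ≤ m) : (Fin.ofNat (m + 1) k).val = k := by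
  simp [Fin.ofNat, Nat.mod_eq_of_lt (Nat.lt_succ_of_le h)]

theorem mem_aux {m r : ℕ} {p : (_ : ℕ) × ℕ}
    (hp : p ∈ (Finset.Icc 1 r).sigma (fun i => Finset.range (m / 2 ^ i))) :
    1 ≤ p.1 ∧ p.1 ≤ r ∧ (p.2 + 1) * 2 ^ p.1 ≤ m := by
  simp only [Finset.mem_sigma, Finset.mem_Icc, Finset.mem_range] at hp
  refine ⟨hp.1.1, hp.1.2, ?_⟩
  exact (Nat.le_div_iff_mul_le (by positivity)).1 hp.2

theorem edgeMap_injOn (m r : ℕ) : Set.InjOn (edgeMap m)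
    ((Finset.Icc 1 r).sigma (fun i => Finset.range (m / 2 ^ i)) : Finset _) := by
  rintro ⟨i, a⟩ hp ⟨j, b⟩ hq h
  obtain ⟨h1, -, h3⟩ := mem_aux hp
  obtain ⟨k1, -, k3⟩ := mem_aux hq
  simp only at h1 h3 k1 k3
  have hi := two_le_pow_aux h1
  have hj := two_le_pow_aux k1
  have ea : (a + 1) * 2 ^ i = a * 2 ^ i + 2 ^ i := by ring
  have eb : (b + 1) * 2 ^ j = b * 2 ^ j + 2 ^ j := by ring
  simp only [edgeMap, Sym2.eq_iff, Fin.ext_iff] at h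
  rw [val_aux h3, val_aux k3, val_aux (by omega : a * 2 ^ i ≤ m),
    val_aux (by omega : b * 2 ^ j ≤ m)] at h
  have hij : 2 ^ i = 2 ^ j := by omega
  have hij' : i = j := Nat.pow_right_injective (le_refl 2) hij
  subst hij'
  have hab : a * 2 ^ i = b * 2 ^ i := by omega
  have : a = b := Nat.eq_of_mul_eq_mul_right (by omega) hab
  subst this
  rfl

theorem edgeMap_image (m r : ℕ) :
    (cutInHalf (m + 1) r).edgeSet \ (pathGraph' (m + 1)).edgeSet = edgeMap m ''
    ((Finset.Icc 1 r).sigma (fun i => Finset.range (m / 2 ^ i)) : Finset _) := by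
  have key : ∀ (u v : Fin (m + 1)) (i a : ℕ), 1 ≤ i → i ≤ r → (a + 1) * 2 ^ i ≤ m →
      u.val = a * 2 ^ i → v.val = (a + 1) * 2 ^ i →
      s(u, v) ∈ edgeMap m ''
    ((Finset.Icc 1 r).sigma (fun i => Finset.range (m / 2 ^ i)) : Finset _) := by
    intro u v i a h1 h2 h3 hu hv
    have ea : (a + 1) * 2 ^ i = a * 2 ^ i + 2 ^ i := by ring
    refine ⟨⟨i, a⟩, ?_, ?_⟩
    · simp only [Finset.mem_coe, Finset.mem_sigma, Finset.mem_Icc, Finset.mem_range]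
      exact ⟨⟨h1, h2⟩, (Nat.le_div_iff_mul_le (by positivity)).2 h3⟩
    · simp only [edgeMap, Sym2.eq_iff, Fin.ext_iff]
      left
      rw [val_aux h3, val_aux (by omega : a * 2 ^ i ≤ m)]
      exact ⟨hu.symm, hv.symm⟩
  ext e
  constructor
  · induction e using Sym2.ind with
    | _ u v =>
      rintro ⟨h1, h2⟩
      simp only [SimpleGraph.mem_edgeSet, cutInHalf, pathGraph', SimpleGraph.fromRel_adj,
        Nat.add_sub_cancel] at h1 h2
      obtain ⟨hne, h1⟩ := h1
      rcases h1 with (h | ⟨i, a, a1, a2, a3, a4, a5⟩) | (h | ⟨i, a, a1, a2, a3, a4, a5⟩)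
      · exact absurd ⟨hne, Or.inl h⟩ h2
      · exact key u v i a a1 a2 a3 a4 a5
      · exact absurd ⟨hne, Or.inr h⟩ h2
      · rw [Sym2.eq_swap]
        exact key v u i a a1 a2 a3 a4 a5
  · rintro ⟨⟨i, a⟩, hp, rfl⟩
    obtain ⟨h1, h2, h3⟩ := mem_aux hp
    simp only at h1 h2 h3
    have hi := two_le_pow_aux h1
    have ea : (a + 1) * 2 ^ i = a * 2 ^ i + 2 ^ i := by ring
    have v1 := val_aux h3
    have v2 := val_aux (by omega : a * 2 ^ i ≤ m)
    simp only [edgeMap, Set.mem_sdiff, SimpleGraph.mem_edgeSet, cutInHalf, pathGraph',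
      SimpleGraph.fromRel_adj, Nat.add_sub_cancel, ne_eq, Fin.ext_iff]
    rw [v1, v2]
    refine ⟨⟨by omega, Or.inl (Or.inr ⟨i, a, h1, h2, h3, rfl, rfl⟩)⟩, ?_⟩
    omega

/-- The number of non-path edges of the CutInHalf graph `H_r` equals
`Σ_{i=1}^{r} ⌊(n-1)/2^i⌋`, which is at most `n - 1`; hence the CutInHalf construction
uses at most `n - 1` edge activations in total. -/
theorem cutInHalf_edge_activations (n r : ℕ) (hn : 2 ≤ n) :
    ((cutInHalf n r).edgeSet \ (pathGraph' n).edgeSet).ncard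
        = ∑ i ∈ Finset.Icc 1 r, (n - 1) / 2 ^ i ∧
      (∑ i ∈ Finset.Icc 1 r, (n - 1) / 2 ^ i) ≤ n - 1 := by
  obtain ⟨m, rfl⟩ : ∃ m, n = m + 1 := ⟨n - 1, by omega⟩
  refine ⟨?_, ?_⟩
  · rw [edgeMap_image, Set.ncard_image_of_injOn (edgeMap_injOn m r), Set.ncard_coe_finset,
      Finset.card_sigma]
    simp
  · exact le_trans (Nat.le_add_left _ _) (sum_aux (m + 1 - 1) r)
end

section
/- Let T be a tree on n ≥ 2 vertices rooted at a vertex u_0 of depth d ≥ 1 (every vertex is at distance at most d from u_0 in T). Then there exists an actively dynamic sequence G_0 = T, G_1, …, G_k with k = ⌈log₂ d⌉ such that G_k is the spanning star centered at u_0 (its edges are exactly {u_0, v} for all v ≠ u_0), and every graph G_i in the sequence has at most 2n − 3 edges. This is realized by the TreeToStar algorithm, in which, in every round, each non-root node activates an edge with its grandparent and deactivates the edge with its parent. -/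
lemma tts_parent {V : Type*} (G : SimpleGraph V) (hG : G.Connected) (u0 v : V) :
    ∃ w, (v = u0 → w = u0) ∧ (v ≠ u0 → G.Adj v w ∧ G.dist u0 w + 1 = G.dist u0 v) := by
  by_cases h : v = u0
  · exact ⟨u0, fun _ => rfl, fun h' => absurd h h'⟩
  · obtain ⟨p, hp⟩ := hG.exists_walk_length_eq_dist v u0
    cases p with
    | nil => exact absurd rfl h
    | cons hadj q =>
      rename_i w
      refine ⟨w, fun h' => absurd h' h, fun _ => ⟨hadj, ?_⟩⟩
      have h1 := SimpleGraph.dist_le q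
      rw [SimpleGraph.Walk.length_cons] at hp
      have h2 := hG.dist_triangle (u := v) (v := w) (w := u0)
      rw [SimpleGraph.dist_eq_one_iff_adj.mpr hadj] at h2
      rw [SimpleGraph.dist_comm (u := u0) (v := w), SimpleGraph.dist_comm (u := u0) (v := v)]
      omega

/-- The graph joining each vertex with its image under `q`. -/
def ttsGraph {V : Type*} (q : V → V) : SimpleGraph V where
  Adj u v := u ≠ v ∧ (q u = v ∨ q v = u)
  symm := ⟨fun _ _ h => ⟨h.1.symm, h.2.symm⟩⟩
  loopless := ⟨fun _ h => h.1 rfl⟩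

/-- TreeToStar: any tree on `n ≥ 2` vertices rooted at `u₀` of depth `d ≥ 1` can be
transformed by an actively dynamic sequence of length `⌈log₂ d⌉` into the spanning star
centered at `u₀`, with every intermediate graph having at most `2n - 3` edges. -/
theorem treeToStar {V : Type*} [Fintype V] (hn : 2 ≤ Fintype.card V)
    (G : SimpleGraph V) (hG : G.IsTree) (u0 : V) (d : ℕ) (hd : 1 ≤ d)
    (hdepth : ∀ v : V, G.dist u0 v ≤ d) :
    ∃ Gs : ℕ → SimpleGraph V,
      Gs 0 = G ∧ ActivelyDynamic Gs (Nat.clog 2 d) ∧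
      (∀ u v : V, (Gs (Nat.clog 2 d)).Adj u v ↔ u ≠ v ∧ (u = u0 ∨ v = u0)) ∧
      (∀ i ≤ Nat.clog 2 d, (Gs i).edgeSet.ncard ≤ 2 * Fintype.card V - 3) := by
  classical
  choose p hp0 hp using tts_parent G hG.connected u0
  have hfix : ∀ m, p^[m] u0 = u0 := fun m => Function.iterate_fixed (hp0 u0 rfl) m
  have hiter : ∀ m v, G.dist u0 v ≤ m → p^[m] v = u0 := by
    intro m
    induction m with
    | zero =>
      intro v hv
      exact ((hG.connected.dist_eq_zero_iff).mp (Nat.le_zero.mp hv)).symm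
    | succ m ih =>
      intro v hv
      rw [Function.iterate_succ_apply]
      by_cases h : v = u0
      · rw [hp0 v h]; exact hfix m
      · apply ih
        have := (hp v h).2
        omega
  have hle : ttsGraph p ≤ G := by
    have key : ∀ u v, u ≠ v → p u = v → G.Adj u v := by
      intro u v huv h
      have hu : u ≠ u0 := by
        rintro rfl
        exact huv ((hp0 u rfl).symm.trans h)
      exact h ▸ (hp u hu).1
    rintro u v ⟨huv, h | h⟩
    · exact key u v huv h
    · exact (key v u huv.symm h).symm
  have hreach : ∀ m v, (ttsGraph p).Reachable v (p^[m] v) := by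
    intro m v
    induction m with
    | zero => exact SimpleGraph.Reachable.refl _
    | succ m ih =>
      rw [Function.iterate_succ_apply']
      by_cases h : p^[m] v = p (p^[m] v)
      · rw [← h]; exact ih
      · have ha : (ttsGraph p).Adj (p^[m] v) (p (p^[m] v)) := ⟨h, Or.inl rfl⟩
        exact ih.trans ha.reachable
  have hconn : (ttsGraph p).Connected := by
    have : Nonempty V := ⟨u0⟩
    refine ⟨fun u v => ?_⟩
    have hu := hreach d u
    have hv := hreach d v
    rw [hiter d _ (hdepth _)] at hu hv
    exact hu.trans hv.symm
  have heq : ttsGraph p = G :=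
    le_antisymm hle ((SimpleGraph.isTree_iff_minimal_connected.mp hG).2 hconn hle)
  refine ⟨fun i => ttsGraph (p^[2 ^ i]), by simpa using heq, ?_, ?_, ?_⟩
  · intro i _ u v huv hnot
    have hsq : ∀ x, p^[2 ^ (i + 1)] x = p^[2 ^ i] (p^[2 ^ i] x) := by
      intro x
      rw [← Function.iterate_add_apply, pow_succ, mul_two]
    have key : ∀ u v, u ≠ v → p^[2 ^ (i + 1)] u = v →
        ¬ (ttsGraph (p^[2 ^ i])).Adj u v →
        ∃ w, (ttsGraph (p^[2 ^ i])).Adj u w ∧ (ttsGraph (p^[2 ^ i])).Adj w v := by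
      intro u v huv h hnot
      rw [hsq] at h
      refine ⟨p^[2 ^ i] u, ⟨fun h' => ?_, Or.inl rfl⟩, ⟨fun h' => ?_, Or.inl h⟩⟩
      · rw [← h', ← h'] at h
        exact huv h
      · exact hnot ⟨huv, Or.inl h'⟩
    obtain ⟨hne, h | h⟩ := huv
    · exact key u v hne h hnot
    · obtain ⟨w, h1, h2⟩ := key v u hne.symm h (fun h' => hnot h'.symm)
      exact ⟨w, h2.symm, h1.symm⟩
  · intro u v
    have hall : ∀ x, p^[2 ^ Nat.clog 2 d] x = u0 := fun x =>
      hiter _ x ((hdepth x).trans (Nat.le_pow_clog (by norm_num) d))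
    change (u ≠ v ∧ (_ ∨ _)) ↔ _
    rw [hall, hall, eq_comm (a := u0) (b := v), eq_comm (a := u0) (b := u), or_comm]
  · intro i _
    have hsub : (ttsGraph (p^[2 ^ i])).edgeSet ⊆
        ((Finset.univ.erase u0).image (fun v => s(v, p^[2 ^ i] v)) : Finset (Sym2 V)) := by
      have key : ∀ u v, u ≠ v → p^[2 ^ i] u = v → s(u, v) ∈
          (Finset.univ.erase u0).image (fun v => s(v, p^[2 ^ i] v)) := by
        intro u v huv h
        refine Finset.mem_image.mpr ⟨u, Finset.mem_erase.mpr ⟨?_, Finset.mem_univ _⟩, by rw [h]⟩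
        rintro rfl
        exact huv ((hfix _).symm.trans h)
      intro e
      induction e using Sym2.ind with
      | _ u v =>
        rintro ⟨huv, h | h⟩
        · exact key u v huv h
        · rw [Sym2.eq_swap]
          exact key v u huv.symm h
    have h1 := Set.ncard_le_ncard hsub (Finset.finite_toSet _)
    rw [Set.ncard_coe_finset] at h1
    have h2 := h1.trans Finset.card_image_le
    rw [Finset.card_erase_of_mem (Finset.mem_univ _), Finset.card_univ] at h2
    change (ttsGraph (p^[2 ^ i])).edgeSet.ncard ≤ _
    omega
end

section
/- Let P_n be the path graph on n ≥ 2 vertices. Then there exists an actively dynamic sequence G_0 = P_n, G_1, …, G_k with k = ⌈log₂ n⌉ such that: every graph G_i has maximum degree at most 4 and at most 2n − 3 edges; and G_k is a tree having a vertex r (an endpoint of the original path) with maximum degree of G_k at most 3 and dist_{G_k}(r, v) ≤ ⌈log₂ n⌉ for every vertex v. This is realized by the LineToCompleteBinaryTree algorithm, which transforms an oriented spanning line into a complete binary tree. -/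
/-- Parent of vertex `v` after `t` rounds. -/
def par : ℕ → ℕ → ℕ
  | 0, v => v - 1
  | t + 1, v => if 3 * 2 ^ t ≤ v + 1 then v - 2 ^ (t + 1) else par t v

theorem par_big (t v : ℕ) (hv : 2 ^ (t + 1) ≤ v + 1) : par t v = v - 2 ^ t := by
  cases t with
  | zero => simp [par]
  | succ t =>
    have : 3 * 2 ^ t ≤ v + 1 := by rw [pow_succ, pow_succ] at hv; omega
    simp [par, this]

theorem par_lt (t v : ℕ) (hv : 1 ≤ v) : par t v < v := by
  induction t with
  | zero => simp [par]; omega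
  | succ t ih =>
    have := Nat.two_pow_pos (t + 1)
    simp only [par]
    split_ifs <;> omega

theorem par_children (t v : ℕ) (hv : 1 ≤ v) :
    (par t v + 1 < 2 ^ t ∧ (v = par t v + 2 ^ Nat.log 2 (par t v + 1) ∨
        v = par t v + 2 ^ (Nat.log 2 (par t v + 1) + 1))) ∨
      (2 ^ t ≤ par t v + 1 ∧ v = par t v + 2 ^ t) := by
  induction t with
  | zero => right; simp [par]; omega
  | succ t ih =>
    have hp := Nat.two_pow_pos (t)
    have h2 : 2 ^ (t + 1) = 2 * 2 ^ t := by ring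
    have hlog : ∀ w, 2 ^ t ≤ w + 1 → w + 1 < 2 ^ (t + 1) → Nat.log 2 (w + 1) = t := by
      intro w h1 h2
      exact (Nat.log_eq_iff (Or.inr ⟨by norm_num, by omega⟩)).2 ⟨h1, h2⟩
    by_cases h : 3 * 2 ^ t ≤ v + 1
    · have e : par (t + 1) v = v - 2 ^ (t + 1) := by simp [par, h]
      rw [e]
      by_cases h' : 2 ^ (t + 1) ≤ v - 2 ^ (t + 1) + 1
      · right; omega
      · left
        refine ⟨by omega, Or.inr ?_⟩
        rw [hlog _ (by omega) (by omega)]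
        omega
    · have e : par (t + 1) v = par t v := by simp [par, h]
      rw [e]
      rcases ih with ⟨h1, h3⟩ | ⟨h1, h3⟩
      · left; exact ⟨by omega, h3⟩
      · left
        refine ⟨by omega, Or.inl ?_⟩
        rw [hlog _ (by omega) (by omega)]
        exact h3

/-- The graph after `t` rounds. -/
def treeG (n t : ℕ) : SimpleGraph (Fin n) :=
  SimpleGraph.fromRel (fun u v => 1 ≤ v.val ∧ par t v.val = u.val)

theorem treeG_adj {n t : ℕ} {u v : Fin n} : (treeG n t).Adj u v ↔
    (1 ≤ v.val ∧ par t v.val = u.val) ∨ (1 ≤ u.val ∧ par t u.val = v.val) := by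
  simp only [treeG, SimpleGraph.fromRel_adj]
  constructor
  · exact fun h => h.2
  · intro h
    refine ⟨?_, h⟩
    rintro rfl
    rcases h with ⟨h, h'⟩ | ⟨h, h'⟩ <;> exact absurd h' (par_lt t _ h).ne

theorem treeG_degree (n t : ℕ) (v : Fin n) : ((treeG n t).neighborSet v).ncard ≤ 3 := by
  obtain ⟨a, b, hab⟩ : ∃ a b : ℕ, ∀ u, 1 ≤ u → par t u = v.val → u = a ∨ u = b := by
    by_cases h : v.val + 1 < 2 ^ t
    · refine ⟨v.val + 2 ^ Nat.log 2 (v.val + 1), v.val + 2 ^ (Nat.log 2 (v.val + 1) + 1), ?_⟩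
      intro u hu e
      have := par_children t u hu
      rw [e] at this
      omega
    · refine ⟨v.val + 2 ^ t, v.val + 2 ^ t, ?_⟩
      intro u hu e
      have := par_children t u hu
      rw [e] at this
      omega
  have hsub : Fin.val '' ((treeG n t).neighborSet v) ⊆ (({a, b, par t v.val} : Finset ℕ) : Set ℕ) := by
    rintro _ ⟨u, hu, rfl⟩
    rw [SimpleGraph.mem_neighborSet, treeG_adj] at hu
    rcases hu with ⟨h1, h2⟩ | ⟨h1, h2⟩
    · rcases hab _ h1 h2 with h | h <;> simp [h]
    · simp [h2]
  rw [← Set.ncard_image_of_injective _ Fin.val_injective]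
  refine (Set.ncard_le_ncard hsub (Finset.finite_toSet _)).trans ?_
  rw [Set.ncard_coe_finset]
  exact Finset.card_le_three

theorem treeG_edges (n t : ℕ) (hn : 2 ≤ n) : (treeG n t).edgeSet.ncard + 1 ≤ n := by
  classical
  let z : Fin n := ⟨0, by omega⟩
  let f : Fin n → Sym2 (Fin n) := fun v =>
    if h : 1 ≤ v.val then s(v, ⟨par t v.val, (par_lt t _ h).trans v.2⟩) else s(v, v)
  have hsub : (treeG n t).edgeSet ⊆ (((Finset.univ.erase z).image f : Finset _) : Set _) := by
    intro e
    induction e using Sym2.ind with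
    | _ u v =>
      intro h
      rw [SimpleGraph.mem_edgeSet, treeG_adj] at h
      simp only [Finset.coe_image, Set.mem_image, Finset.mem_coe, Finset.mem_erase,
        Finset.mem_univ, and_true]
      rcases h with ⟨h1, h2⟩ | ⟨h1, h2⟩
      · refine ⟨v, ?_, ?_⟩
        · intro h; rw [h] at h1; simp [z] at h1
        · simp only [f, h1, dif_pos, h2]; exact Sym2.eq_swap
      · refine ⟨u, ?_, ?_⟩
        · intro h; rw [h] at h1; simp [z] at h1
        · simp only [f, h1, dif_pos, h2]
  have h1 := Set.ncard_le_ncard hsub (Finset.finite_toSet _)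
  rw [Set.ncard_coe_finset] at h1
  have h2 := (Finset.card_image_le (s := Finset.univ.erase z) (f := f))
  rw [Finset.card_erase_of_mem (Finset.mem_univ _), Finset.card_univ, Fintype.card_fin] at h2
  omega

theorem treeG_reach (n t : ℕ) (hn : 2 ≤ n) (m : ℕ) : ∀ hm : m < n,
    (treeG n t).Reachable ⟨0, by omega⟩ ⟨m, hm⟩ := by
  induction m using Nat.strong_induction_on with
  | _ m ih =>
    intro hm
    by_cases h : 1 ≤ m
    · have hlt := par_lt t m h
      refine (ih _ hlt (by omega)).trans (SimpleGraph.Adj.reachable ?_)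
      rw [treeG_adj]
      exact Or.inl ⟨h, rfl⟩
    · obtain rfl : m = 0 := by omega
      exact SimpleGraph.Reachable.refl _

theorem treeG_connected (n t : ℕ) (hn : 2 ≤ n) : (treeG n t).Connected := by
  rw [SimpleGraph.connected_iff_exists_forall_reachable]
  exact ⟨⟨0, by omega⟩, fun v => treeG_reach n t hn v.val v.2⟩

theorem treeG_isTree (n t : ℕ) (hn : 2 ≤ n) : (treeG n t).IsTree := by
  rw [SimpleGraph.isTree_iff_connected_and_card]
  refine ⟨treeG_connected n t hn, ?_⟩
  have h1 := (treeG_connected n t hn).card_vert_le_card_edgeSet_add_one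
  have h2 := treeG_edges n t hn
  rw [← Nat.card_coe_set_eq] at h2
  have h3 : Nat.card (Fin n) = n := by simp
  omega

theorem treeG_dist (n t : ℕ) (hn : 2 ≤ n) (ht : n ≤ 2 ^ t) (m : ℕ) : ∀ hm : m < n,
    (treeG n t).dist ⟨0, by omega⟩ ⟨m, hm⟩ ≤ Nat.log 2 (m + 1) := by
  induction m using Nat.strong_induction_on with
  | _ m ih =>
    intro hm
    by_cases h : 1 ≤ m
    · have hlt := par_lt t m h
      have hadj : (treeG n t).Adj ⟨par t m, by omega⟩ ⟨m, hm⟩ := by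
        rw [treeG_adj]
        exact Or.inl ⟨h, rfl⟩
      have h1 := (treeG_connected n t hn).dist_triangle (u := ⟨0, by omega⟩)
        (v := ⟨par t m, by omega⟩) (w := ⟨m, hm⟩)
      rw [SimpleGraph.dist_eq_one_iff_adj.2 hadj] at h1
      have h2 := ih _ hlt (by omega)
      have h3 : Nat.log 2 (par t m + 1) + 1 ≤ Nat.log 2 (m + 1) := by
        apply Nat.le_log_of_pow_le (by norm_num)
        have h4 := Nat.pow_log_le_self 2 (x := par t m + 1) (by omega)
        have h5 := par_children t m h
        have h6 := pow_succ 2 (Nat.log 2 (par t m + 1))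
        omega
      omega
    · obtain rfl : m = 0 := by omega
      simp

theorem treeG_dynamic (n T : ℕ) : ActivelyDynamic (treeG n) T := by
  have key : ∀ t, ∀ u v : Fin n, 1 ≤ v.val → par (t + 1) v.val = u.val →
      par t v.val ≠ u.val → ∃ w : Fin n, (treeG n t).Adj u w ∧ (treeG n t).Adj w v := by
    intro t u v hv h1 h2
    by_cases h : 3 * 2 ^ t ≤ v.val + 1
    · have hp := Nat.two_pow_pos (t)
      have e2 : 2 ^ (t + 1) = 2 * 2 ^ t := by ring
      have e : par (t + 1) v.val = v.val - 2 ^ (t + 1) := by simp [par, h]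
      have hvp : par t v.val = v.val - 2 ^ t := par_big t _ (by omega)
      have hvpp : par t (v.val - 2 ^ t) = v.val - 2 ^ t - 2 ^ t := par_big t _ (by omega)
      refine ⟨⟨v.val - 2 ^ t, by omega⟩, ?_, ?_⟩
      · rw [treeG_adj]; left; exact ⟨by simp only; omega, by simp only; omega⟩
      · rw [treeG_adj]; left; exact ⟨hv, hvp⟩
    · exact absurd (by simpa [par, h] using h1) h2
  intro t _ u v h1 h2
  rw [treeG_adj] at h1 h2
  push Not at h2
  rcases h1 with ⟨ha, hb⟩ | ⟨ha, hb⟩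
  · exact key t u v ha hb (h2.1 ha)
  · obtain ⟨w, hw1, hw2⟩ := key t v u ha hb (h2.2 ha)
    exact ⟨w, hw2.symm, hw1.symm⟩

/-- LineToCompleteBinaryTree: the path `P_n` (`n ≥ 2`) can be transformed by an actively
dynamic sequence of length `⌈log₂ n⌉` such that every intermediate graph has maximum
degree at most 4 and at most `2n - 3` edges, and the final graph is a tree of maximum
degree at most 3 with a root `r` (an endpoint of the original path) within distance
`⌈log₂ n⌉` of every vertex. -/
theorem lineToCompleteBinaryTree (n : ℕ) (hn : 2 ≤ n) :
    ∃ Gs : ℕ → SimpleGraph (Fin n),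
      Gs 0 = pathGraph' n ∧ ActivelyDynamic Gs (Nat.clog 2 n) ∧
      (∀ i ≤ Nat.clog 2 n,
        (∀ v : Fin n, ((Gs i).neighborSet v).ncard ≤ 4) ∧
        (Gs i).edgeSet.ncard ≤ 2 * n - 3) ∧
      (Gs (Nat.clog 2 n)).IsTree ∧
      ∃ r : Fin n, (r.val = 0 ∨ r.val = n - 1) ∧
        (∀ v : Fin n, ((Gs (Nat.clog 2 n)).neighborSet v).ncard ≤ 3) ∧
        (∀ v : Fin n, (Gs (Nat.clog 2 n)).dist r v ≤ Nat.clog 2 n) := by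
  have hk : n ≤ 2 ^ Nat.clog 2 n := Nat.le_pow_clog (by norm_num) n
  refine ⟨treeG n, ?_, treeG_dynamic n _, ?_, treeG_isTree n _ hn, ⟨0, by omega⟩, Or.inl rfl,
    treeG_degree n _, ?_⟩
  · ext u v
    simp only [treeG_adj, pathGraph', SimpleGraph.fromRel_adj, par, ne_eq, Fin.ext_iff]
    omega
  · intro i _
    refine ⟨fun v => (treeG_degree n i v).trans (by norm_num), ?_⟩
    have := treeG_edges n i hn
    omega
  · intro v
    refine (treeG_dist n _ hn hk v.val v.2).trans ?_
    calc Nat.log 2 (v.val + 1) ≤ Nat.log 2 (2 ^ Nat.clog 2 n) :=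
          Nat.log_mono_right (by have := v.2; omega)
      _ = Nat.clog 2 n := Nat.log_pow (by norm_num) _
end
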